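/- For words over the four-letter alphabet {a, a⁻¹, b, b⁻¹}, the number of reduced bracelets of length n (equivalence classes of freely and cyclically reduced words under the equivalence generated by cyclic rotation and group-theoretic inversion) is: 2 for n = 1, 4 for n = 2, 6 for n = 3, 13 for n = 4, 26 for n = 5, 66 for n = 6, 158 for n = 7, 418 for n = 8, 1098 for n = 9, and 2968 for n = 10. -/

import Mathlib

/-- The group-theoretic inverse of a letter in the alphabet `{a, a⁻¹, b, b⁻¹}`,
where a letter is a pair (generator, sign). -/
def invLetter (x : Fin 2 × Bool) : Fin 2 × Bool := (x.1, !x.2)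

/-- The group-theoretic inverse of a word: reverse the word and invert each letter. -/
def wordInv (l : List (Fin 2 × Bool)) : List (Fin 2 × Bool) := (l.map invLetter).reverse

/-- A word is freely reduced if no two adjacent letters are mutually inverse. -/
def FreelyReduced (l : List (Fin 2 × Bool)) : Prop :=
  l.Chain' (fun x y => y ≠ invLetter x)

/-- A word is cyclically reduced if it is freely reduced and its first letter is
not the inverse of its last letter. -/
def CyclicallyReduced (l : List (Fin 2 × Bool)) : Prop :=
  FreelyReduced l ∧ ∀ x ∈ l.head?, ∀ y ∈ l.getLast?, x ≠ invLetter y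

/-- The type of freely and cyclically reduced words of length `n` over the
alphabet `{a, a⁻¹, b, b⁻¹}`. -/
def CRWord (n : ℕ) := {l : List (Fin 2 × Bool) // l.length = n ∧ CyclicallyReduced l}

/-- One basic move between cyclically reduced words: a cyclic rotation or a
group-theoretic inversion.  Reduced bracelets are the classes of the
equivalence relation generated by these moves. -/
def braceletStep (n : ℕ) (x y : CRWord n) : Prop :=
  y.val = x.val.rotate 1 ∨ y.val = wordInv x.val

/-- The number of reduced bracelets of length `n`: the number of equivalence
classes of freely and cyclically reduced words of length `n` under the
equivalence generated by rotation and inversion. -/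
noncomputable def braceletCount (n : ℕ) : ℕ := Nat.card (Quot (braceletStep n))

abbrev Letter := Fin 2 × Bool

theorem invLetter_invLetter (x : Letter) : invLetter (invLetter x) = x := by
  simp [invLetter]

theorem invLetter_ne (x : Letter) : x ≠ invLetter x := by
  revert x; decide

/-- cyclic functions -/
abbrev CycFun (n : ℕ) := {f : ZMod n → Letter // ∀ i, f (i + 1) ≠ invLetter (f i)}

/-- lists bridging a and b -/
def Bridge (n : ℕ) (a b : Letter) :=
  {l : List Letter // l.length = n ∧ (a :: (l ++ [b])).IsChain (fun x y => y ≠ invLetter x)}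

instance bridgeFinite (n : ℕ) (a b : Letter) : Finite (Bridge n a b) := by
  have h := List.finite_length_eq Letter n
  exact (h.subset (fun l (hl : l.length = n ∧ _) => hl.1)).to_subtype

instance crwordFinite (n : ℕ) : Finite (CRWord n) := by
  have h := List.finite_length_eq Letter n
  exact (h.subset (fun l (hl : l.length = n ∧ _) => hl.1)).to_subtype

def bridgeSucc (n : ℕ) (a b : Letter) :
    Bridge (n + 1) a b ≃ Σ c : {c : Letter // c ≠ invLetter a}, Bridge n c.1 b where
  toFun
    | ⟨[], h⟩ => absurd h.1 (by simp)
    | ⟨c :: l, h⟩ => ⟨⟨c, by have := h.2; simp at this; exact this.1⟩,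
        ⟨l, by simpa using h.1, by have := h.2; simp at this; simpa using this.2⟩⟩
  invFun x := ⟨x.1.1 :: x.2.1, by simp [x.2.2.1], by
    have h := x.2.2.2
    have h' := x.1.2
    simp only [List.cons_append, List.isChain_cons_cons]
    exact ⟨h', h⟩⟩
  left_inv
    | ⟨[], h⟩ => absurd h.1 (by simp)
    | ⟨c :: l, h⟩ => rfl
  right_inv x := rfl

/-- transfer recursion -/
def tr : ℕ → ℕ × ℕ × ℕ
  | 0 => (1, 0, 1)
  | n + 1 => ((tr n).1 + 2 * (tr n).2.2, (tr n).2.1 + 2 * (tr n).2.2,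
      (tr n).1 + (tr n).2.1 + (tr n).2.2)

theorem bridge_card (n : ℕ) (a b : Letter) : Nat.card (Bridge n a b) =
    if b = a then (tr n).1 else if b = invLetter a then (tr n).2.1 else (tr n).2.2 := by
  induction n generalizing a b with
  | zero =>
    have key : Nat.card (Bridge 0 a b) = if b = invLetter a then 0 else 1 := by
      split_ifs with h
      · have : IsEmpty (Bridge 0 a b) := ⟨fun ⟨l, h1, h2⟩ => by
          rw [List.length_eq_zero_iff] at h1; subst h1; simp at h2; exact h2 h⟩
        simp
      · have : Unique (Bridge 0 a b) :=
          { default := ⟨[], rfl, by simpa using h⟩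
            uniq := fun ⟨l, h1, h2⟩ => Subtype.ext (List.length_eq_zero_iff.1 h1) }
        simp
    rw [key]; clear key; revert a b; decide
  | succ n ih =>
    rw [Nat.card_congr (bridgeSucc n a b), Nat.card_sigma]
    simp only [ih]
    rw [← Finset.sum_subtype (Finset.univ.filter (fun c => c ≠ invLetter a)) (by simp)
      (fun c => if b = c then (tr n).1 else if b = invLetter c then (tr n).2.1 else (tr n).2.2)]
    rw [Finset.sum_filter]
    obtain ⟨a1, a2⟩ := a
    obtain ⟨b1, b2⟩ := b
    fin_cases a1 <;> fin_cases b1 <;> cases a2 <;> cases b2 <;>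
      simp [Fintype.sum_prod_type, invLetter, tr] <;> ring

def crwordSigma (n : ℕ) : CRWord (n + 1) ≃ Σ a : Letter, Bridge n a a where
  toFun
    | ⟨[], h⟩ => absurd h.1 (by simp)
    | ⟨c :: l, h⟩ => ⟨c, l, by simpa using h.1, by
        have h2 := h.2.1
        have h3 := h.2.2
        rw [← List.cons_append, List.isChain_append]
        refine ⟨h2, by simp, ?_⟩
        intro x hx y hy
        simp at hy
        subst hy
        exact h3 _ (by simp) _ hx⟩
  invFun x := ⟨x.1 :: x.2.1, by simp [x.2.2.1], by
    have h := x.2.2.2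
    rw [← List.cons_append, List.isChain_append] at h
    refine ⟨h.1, ?_⟩
    intro u hu v hv
    simp at hu
    subst hu
    exact h.2.2 _ hv _ (by simp)⟩
  left_inv
    | ⟨[], h⟩ => absurd h.1 (by simp)
    | ⟨c :: l, h⟩ => rfl
  right_inv x := rfl

theorem crword_card (n : ℕ) : Nat.card (CRWord (n + 1)) = 4 * (tr n).1 := by
  rw [Nat.card_congr (crwordSigma n), Nat.card_sigma]
  simp [bridge_card]

theorem cyc_iff_fin (n : ℕ) (f : Fin (n + 1) → Letter) :
    CyclicallyReduced (List.ofFn f) ↔ ∀ i, f (i + 1) ≠ invLetter (f i) := by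
  have hlast : (List.ofFn f).getLast? = some (f (Fin.last n)) := by
    rw [List.getLast?_eq_getElem?, List.getElem?_ofFn]
    simp [Fin.last]
  have hhead : (List.ofFn f).head? = some (f 0) := by
    simp
  unfold CyclicallyReduced FreelyReduced
  rw [hlast, hhead]
  change List.IsChain _ _ ∧ _ ↔ _
  rw [List.isChain_iff_getElem]
  constructor
  · rintro ⟨h1, h2⟩ i
    refine Fin.lastCases ?_ (fun j => ?_) i
    · rw [Fin.last_add_one]
      exact h2 _ rfl _ rfl
    · have := h1 j.1 (by simp)
      rw [Fin.coeSucc_eq_succ]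
      rw [List.getElem_ofFn, List.getElem_ofFn] at this
      exact this
  · intro h
    refine ⟨?_, ?_⟩
    · intro i hi
      simp at hi
      have := h (Fin.castSucc ⟨i, hi⟩)
      rw [Fin.coeSucc_eq_succ] at this
      rw [List.getElem_ofFn, List.getElem_ofFn]
      exact this
    · intro x hx y hy
      simp at hx hy
      subst hx hy
      have := h (Fin.last n)
      rwa [Fin.last_add_one] at this

theorem cyc_iff (n : ℕ) (f : ZMod (n + 1) → Letter) :
    CyclicallyReduced (List.ofFn (n := n + 1) f) ↔ ∀ i, f (i + 1) ≠ invLetter (f i) :=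
  cyc_iff_fin n f

theorem rot_fin (n : ℕ) (f : Fin (n + 1) → Letter) :
    List.ofFn (fun x => f (x + 1)) = (List.ofFn f).rotate 1 := by
  apply List.ext_getElem
  · simp
  · intro i h1 h2
    rw [List.getElem_rotate, List.getElem_ofFn, List.getElem_ofFn]
    congr 1
    apply Fin.ext
    rw [Fin.val_add, Fin.val_one']
    simp

theorem rev_fin (n : ℕ) (f : Fin (n + 1) → Letter) :
    List.ofFn (fun x => invLetter (f (Fin.rev x))) = wordInv (List.ofFn f) := by
  unfold wordInv
  apply List.ext_getElem
  · simp
  · intro i h1 h2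
    rw [List.getElem_reverse, List.getElem_map, List.getElem_ofFn, List.getElem_ofFn]
    congr 2
    apply Fin.ext
    simp [Fin.val_rev]

theorem rev_zmod (n : ℕ) (x : ZMod (n + 1)) : -x - 1 = (Fin.rev (n := n + 1) x : ZMod (n + 1)) := by
  have e : ∀ x : Fin (n + 1), Fin.rev x + (x + 1) = 0 := by
    intro x
    apply Fin.ext
    rw [Fin.val_add, Fin.val_add, Fin.val_rev, Fin.val_one']
    have := x.2
    simp
    rw [show n - x.1 + (x.1 + 1) = n + 1 by omega]
    simp
  have e' : ∀ y : ZMod (n + 1), y + (x + 1) = 0 → -x - 1 = y := by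
    intro y hy
    linear_combination -hy
  exact e' _ (e x)

def toWord (n : ℕ) (f : CycFun (n + 1)) : CRWord (n + 1) :=
  ⟨List.ofFn (n := n + 1) f.1, List.length_ofFn, (cyc_iff n f.1).2 f.2⟩

theorem toWord_bij (n : ℕ) : Function.Bijective (toWord n) := by
  constructor
  · intro f g h
    have := congrArg Subtype.val h
    exact Subtype.ext (List.ofFn_injective this)
  · rintro ⟨l, hl, hc⟩
    have e : List.ofFn (fun i : Fin (n + 1) => l[i.1]'(by omega)) = l := by
      apply List.ext_getElem
      · simp [hl]
      · intros; rw [List.getElem_ofFn]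
    have hc' := hc
    rw [← e] at hc'
    exact ⟨⟨_, (cyc_iff_fin n _).1 hc'⟩, Subtype.ext e⟩

noncomputable def wordEquiv (n : ℕ) : CycFun (n + 1) ≃ CRWord (n + 1) :=
  Equiv.ofBijective _ (toWord_bij n)

def dsmul {n : ℕ} : DihedralGroup n → CycFun n → CycFun n
  | .r k, f => ⟨fun x => f.1 (x - k), fun i => by
      have := f.2 (i - k)
      rwa [show i - k + 1 = i + 1 - k by ring] at this⟩
  | .sr k, f => ⟨fun x => invLetter (f.1 (-x - k)), fun i => by
      have := f.2 (-(i + 1) - k)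
      rw [show -(i + 1) - k + 1 = -i - k by ring] at this
      rw [invLetter_invLetter]
      intro h
      exact this h.symm⟩

instance dihAction (n : ℕ) : MulAction (DihedralGroup n) (CycFun n) where
  smul := dsmul
  one_smul f := Subtype.ext (by
    funext x
    change f.1 (x - 0) = f.1 x
    simp)
  mul_smul g h f := Subtype.ext (by
    funext x
    cases g with
    | r i => cases h with
      | r j => change f.1 (x - (i + j)) = f.1 (x - i - j); apply congrArg f.1; ring
      | sr j =>
        change invLetter (f.1 (-x - (j - i))) = invLetter (f.1 (-(x - i) - j)); apply congrArg invLetter; apply congrArg f.1; ring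
    | sr i => cases h with
      | r j => change invLetter (f.1 (-x - (i + j))) = invLetter (f.1 (-x - i - j)); apply congrArg invLetter; apply congrArg f.1; ring
      | sr j =>
        change f.1 (x - (j - i)) = invLetter (invLetter (f.1 (-(-x - i) - j)))
        rw [invLetter_invLetter]; apply congrArg f.1; ring)

theorem r_smul {n : ℕ} (k : ZMod n) (f : CycFun n) (x : ZMod n) :
    (DihedralGroup.r k • f).1 x = f.1 (x - k) := rfl

theorem sr_smul {n : ℕ} (k : ZMod n) (f : CycFun n) (x : ZMod n) :
    (DihedralGroup.sr k • f).1 x = invLetter (f.1 (-x - k)) := rfl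

theorem fixed_sr {n : ℕ} [NeZero n] (k : ZMod n) (f : CycFun n) : DihedralGroup.sr k • f ≠ f := by
  intro h
  have hx : ∀ x, invLetter (f.1 (-x - k)) = f.1 x := fun x => by
    rw [← sr_smul, h]
  have hk : (((-k).val : ℕ) : ZMod n) = -k := ZMod.natCast_zmod_val _
  rcases Nat.even_or_odd' (-k).val with ⟨m, hm | hm⟩
  · rw [hm] at hk
    push_cast at hk
    have := hx m
    rw [show -(m : ZMod n) - k = m by linear_combination -hk] at this
    exact invLetter_ne _ this.symm
  · rw [hm] at hk
    push_cast at hk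
    have h1 := hx (m + 1)
    rw [show -((m : ZMod n) + 1) - k = m by linear_combination -hk] at h1
    exact f.2 m h1.symm

theorem fixed_r (n : ℕ) [NeZero n] (k : ZMod n) :
    Nat.card (MulAction.fixedBy (CycFun n) (DihedralGroup.r k)) =
      Nat.card (CycFun (Nat.gcd k.val n)) := by
  set d := Nat.gcd k.val n with hd
  have hdn : d ∣ n := Nat.gcd_dvd_right _ _
  have hdk : d ∣ k.val := Nat.gcd_dvd_left _ _
  have : NeZero d := ⟨(Nat.gcd_pos_of_pos_right _ (NeZero.pos n)).ne'⟩
  let π : ZMod n →+* ZMod d := ZMod.castHom hdn (ZMod d)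
  have hπ : Function.Surjective π := ZMod.castHom_surjective hdn
  have hπk : π k = 0 := by
    rw [← ZMod.natCast_zmod_val k, map_natCast]
    exact (ZMod.natCast_eq_zero_iff _ _).2 hdk
  symm
  let F : CycFun d → MulAction.fixedBy (CycFun n) (DihedralGroup.r k) := fun g =>
    ⟨⟨fun x => g.1 (π x), fun i => by simpa using g.2 (π i)⟩, by
      rw [MulAction.mem_fixedBy]
      apply Subtype.ext
      funext x
      rw [r_smul]
      simp [hπk]⟩
  apply Nat.card_congr (Equiv.ofBijective F _)
  constructor
  · intro g g' h
    apply Subtype.ext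
    funext y
    obtain ⟨x, rfl⟩ := hπ y
    exact congrFun (congrArg (fun z => z.1.1) h) x
  · rintro ⟨f, hf⟩
    rw [MulAction.mem_fixedBy] at hf
    have h1 : ∀ x, f.1 (x - k) = f.1 x := fun x => by rw [← r_smul, hf]
    have h2 : ∀ (m : ℕ) x, f.1 (x - m * k) = f.1 x := by
      intro m
      induction m with
      | zero => simp
      | succ m ih =>
        intro x
        rw [show x - ((m + 1 : ℕ) : ZMod n) * k = x - m * k - k by push_cast; ring, h1, ih]
    have h3 : ∀ x y, π x = π y → f.1 x = f.1 y := by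
      intro x y hxy
      have h0 : π (x - y) = 0 := by rw [map_sub, hxy, sub_self]
      rw [← ZMod.natCast_zmod_val (x - y), map_natCast, ZMod.natCast_eq_zero_iff] at h0
      obtain ⟨c, hc⟩ := h0
      have hb := Nat.gcd_eq_gcd_ab k.val n
      have hb' := congrArg (fun z : ℤ => (z : ZMod n)) hb
      push_cast at hb'
      rw [ZMod.natCast_zmod_val, ZMod.natCast_self, zero_mul, add_zero, ← hd] at hb'
      have hxy' : x - y = (d : ZMod n) * c := by
        rw [← ZMod.natCast_zmod_val (x - y), hc]; push_cast; ring
      have := h2 ((c * (Nat.gcdA k.val n : ℤ) : ZMod n)).val x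
      rw [ZMod.natCast_zmod_val] at this
      rw [← this]
      apply congrArg f.1
      linear_combination hxy' + c * hb'
    refine ⟨⟨fun y => f.1 (Function.surjInv hπ y), fun i => ?_⟩, ?_⟩
    · change f.1 (Function.surjInv hπ (i + 1)) ≠ invLetter (f.1 (Function.surjInv hπ i))
      rw [h3 _ (Function.surjInv hπ i + 1)]
      · exact f.2 _
      · rw [map_add, map_one, Function.surjInv_eq hπ, Function.surjInv_eq hπ]
    · apply Subtype.ext
      apply Subtype.ext
      funext x
      exact h3 _ _ (Function.surjInv_eq _ _)

theorem word_r (n : ℕ) (f : CycFun (n + 1)) :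
    (wordEquiv n (DihedralGroup.r (-1 : ZMod (n + 1)) • f)).1 = (wordEquiv n f).1.rotate 1 := by
  have h : (DihedralGroup.r (-1 : ZMod (n + 1)) • f).1 = fun x => f.1 (x + 1) := by
    funext x
    rw [r_smul, sub_neg_eq_add]
  exact (congrArg (List.ofFn (n := n + 1)) h).trans (rot_fin n f.1)

theorem word_sr (n : ℕ) (f : CycFun (n + 1)) :
    (wordEquiv n (DihedralGroup.sr (1 : ZMod (n + 1)) • f)).1 = wordInv (wordEquiv n f).1 := by
  have h : (DihedralGroup.sr (1 : ZMod (n + 1)) • f).1 =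
      fun x => invLetter (f.1 (Fin.rev (n := n + 1) x)) := by
    funext x
    rw [sr_smul]
    exact congrArg (fun y => invLetter (f.1 y)) (rev_zmod n x)
  exact (congrArg (List.ofFn (n := n + 1)) h).trans (rev_fin n f.1)

theorem count_orbits (n : ℕ) : braceletCount (n + 1) =
    Nat.card (MulAction.orbitRel.Quotient (DihedralGroup (n + 1)) (CycFun (n + 1))) := by
  unfold braceletCount
  let mkQ : CycFun (n + 1) → Quot (braceletStep (n + 1)) := fun f => Quot.mk _ (wordEquiv n f)
  have hr : ∀ f, mkQ (DihedralGroup.r (-1 : ZMod (n + 1)) • f) = mkQ f := fun f =>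
    (Quot.sound (r := braceletStep (n + 1)) (Or.inl (word_r n f))).symm
  have hs : ∀ f, mkQ (DihedralGroup.sr (1 : ZMod (n + 1)) • f) = mkQ f := fun f =>
    (Quot.sound (r := braceletStep (n + 1)) (Or.inr (word_sr n f))).symm
  have hrm : ∀ (m : ℕ) f, mkQ (DihedralGroup.r (-(m : ZMod (n + 1))) • f) = mkQ f := by
    intro m
    induction m with
    | zero =>
      intro f
      rw [Nat.cast_zero, neg_zero, ← DihedralGroup.one_def, one_smul]
    | succ m ih =>
      intro f
      rw [show DihedralGroup.r (-((m + 1 : ℕ) : ZMod (n + 1))) =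
        DihedralGroup.r (-1 : ZMod (n + 1)) * DihedralGroup.r (-(m : ZMod (n + 1))) by
          rw [DihedralGroup.r_mul_r]; congr 1; push_cast; ring, mul_smul, hr, ih]
  have hrk : ∀ (k : ZMod (n + 1)) f, mkQ (DihedralGroup.r k • f) = mkQ f := by
    intro k f
    have := hrm (-k).val f
    rwa [ZMod.natCast_zmod_val, neg_neg] at this
  have hg : ∀ (g : DihedralGroup (n + 1)) f, mkQ (g • f) = mkQ f := by
    intro g f
    cases g with
    | r k => exact hrk k f
    | sr k =>
      rw [show DihedralGroup.sr k = DihedralGroup.sr (1 : ZMod (n + 1)) * DihedralGroup.r (k - 1) by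
        rw [DihedralGroup.sr_mul_r]; congr 1; ring, mul_smul, hs, hrk]
  refine Nat.card_congr
    { toFun := Quot.lift (fun w => Quotient.mk (MulAction.orbitRel (DihedralGroup (n + 1))
        (CycFun (n + 1))) ((wordEquiv n).symm w)) ?_
      invFun := Quotient.lift mkQ ?_
      left_inv := ?_
      right_inv := ?_ }
  · intro x y h
    obtain ⟨f, rfl⟩ := (wordEquiv n).surjective x
    apply Eq.symm
    apply Quotient.sound
    rw [Equiv.symm_apply_apply]
    change _ ∈ MulAction.orbit _ _
    rcases h with h | h
    · refine ⟨DihedralGroup.r (-1 : ZMod (n + 1)), ?_⟩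
      change DihedralGroup.r (-1 : ZMod (n + 1)) • f = _
      rw [Equiv.eq_symm_apply]
      exact Subtype.ext ((word_r n f).trans h.symm)
    · refine ⟨DihedralGroup.sr (1 : ZMod (n + 1)), ?_⟩
      change DihedralGroup.sr (1 : ZMod (n + 1)) • f = _
      rw [Equiv.eq_symm_apply]
      exact Subtype.ext ((word_sr n f).trans h.symm)
  · rintro a b ⟨g, rfl⟩
    exact hg g b
  · rintro ⟨w⟩
    change Quot.mk _ (wordEquiv n ((wordEquiv n).symm w)) = _
    rw [Equiv.apply_symm_apply]
  · rintro ⟨f⟩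
    change Quotient.mk _ ((wordEquiv n).symm (wordEquiv n f)) = _
    rw [Equiv.symm_apply_apply]
    rfl

theorem cycFun_card (n : ℕ) (h : 0 < n) : Nat.card (CycFun n) = 4 * (tr (n - 1)).1 := by
  obtain ⟨m, rfl⟩ : ∃ m, n = m + 1 := ⟨n - 1, by omega⟩
  rw [Nat.card_congr (wordEquiv m), crword_card]
  rfl

theorem burnside (n : ℕ) :
    ∑ k ∈ Finset.range (n + 1), 4 * (tr (Nat.gcd k (n + 1) - 1)).1 =
      braceletCount (n + 1) * (2 * (n + 1)) := by
  classical
  have : Finite (CycFun (n + 1)) := Finite.of_equiv _ (wordEquiv n).symm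
  have := Fintype.ofFinite (CycFun (n + 1))
  have := Fintype.ofFinite
    (MulAction.orbitRel.Quotient (DihedralGroup (n + 1)) (CycFun (n + 1)))
  have hB := MulAction.sum_card_fixedBy_eq_card_orbits_mul_card_group
    (DihedralGroup (n + 1)) (CycFun (n + 1))
  rw [count_orbits, Nat.card_eq_fintype_card, ← DihedralGroup.card (n := n + 1), ← hB]
  let e : ZMod (n + 1) ⊕ ZMod (n + 1) ≃ DihedralGroup (n + 1) :=
    { toFun := Sum.elim DihedralGroup.r DihedralGroup.sr
      invFun := fun g => match g with
        | .r k => Sum.inl k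
        | .sr k => Sum.inr k
      left_inv := by rintro (x | x) <;> rfl
      right_inv := by rintro (x | x) <;> rfl }
  rw [← e.sum_comp, Fintype.sum_sum_type]
  have h0 : ∀ k, Fintype.card (MulAction.fixedBy (CycFun (n + 1)) (e (Sum.inr k))) = 0 := by
    intro k
    rw [Fintype.card_eq_zero_iff]
    exact ⟨fun f => fixed_sr k f.1 f.2⟩
  have h1 : ∀ k : ZMod (n + 1), Fintype.card (MulAction.fixedBy (CycFun (n + 1)) (e (Sum.inl k))) =
      4 * (tr (Nat.gcd k.val (n + 1) - 1)).1 := by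
    intro k
    rw [← Nat.card_eq_fintype_card]
    exact (fixed_r (n + 1) k).trans
      (cycFun_card _ (Nat.gcd_pos_of_pos_right _ (Nat.succ_pos n)))
  simp only [h0, h1, Finset.sum_const_zero, add_zero]
  exact Finset.sum_range (fun k => 4 * (tr (Nat.gcd k (n + 1) - 1)).1)

theorem count_of (n c : ℕ)
    (h : ∑ k ∈ Finset.range (n + 1), 4 * (tr (Nat.gcd k (n + 1) - 1)).1 = c * (2 * (n + 1))) :
    braceletCount (n + 1) = c :=
  Nat.eq_of_mul_eq_mul_right (by omega) ((burnside n).symm.trans h)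

/-- The counts of reduced bracelets on two generators of lengths 1 through 10. -/
theorem braceletCount_eq :
    braceletCount 1 = 2 ∧ braceletCount 2 = 4 ∧ braceletCount 3 = 6 ∧
    braceletCount 4 = 13 ∧ braceletCount 5 = 26 ∧ braceletCount 6 = 66 ∧
    braceletCount 7 = 158 ∧ braceletCount 8 = 418 ∧ braceletCount 9 = 1098 ∧
    braceletCount 10 = 2968 := by
  exact ⟨count_of 0 2 (by norm_num [Finset.sum_range_succ, tr]), count_of 1 4 (by norm_num [Finset.sum_range_succ, tr]),
    count_of 2 6 (by norm_num [Finset.sum_range_succ, tr]), count_of 3 13 (by norm_num [Finset.sum_range_succ, tr]),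
    count_of 4 26 (by norm_num [Finset.sum_range_succ, tr]), count_of 5 66 (by norm_num [Finset.sum_range_succ, tr]),
    count_of 6 158 (by norm_num [Finset.sum_range_succ, tr]), count_of 7 418 (by norm_num [Finset.sum_range_succ, tr]),
    count_of 8 1098 (by norm_num [Finset.sum_range_succ, tr]), count_of 9 2968 (by norm_num [Finset.sum_range_succ, tr])⟩
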